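/- There exists a spanning tree T* of G whose diameter is at most twice the generalized radius of G: D(T*) ≤ 2·R_gen(G); such a tree is obtained as a shortest paths tree rooted at an absolute center of G. (In particular, a minimum diameter spanning tree of G can be obtained from an absolute center, so the minimum diameter spanning tree problem reduces to finding an absolute center.) -/

import Mathlib

/-- The weight of a walk: the sum of the weights of its edges. -/
noncomputable def walkWeight {V : Type*} (w : V → V → ℝ) {G : SimpleGraph V} {u v : V}
    (p : G.Walk u v) : ℝ :=
  (p.darts.map fun d => w d.toProd.1 d.toProd.2).sum

/-- The weighted distance between two vertices: the least weight of a walk joining them. -/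
noncomputable def wdist {V : Type*} (G : SimpleGraph V) (w : V → V → ℝ) (u v : V) : ℝ :=
  sInf {x : ℝ | ∃ p : G.Walk u v, walkWeight w p = x}

/-!
A point of the edge `ab` at distance `α` from `a` and `β` from `b` lies at distance
`f z = min (α + d(a, z)) (β + d(b, z))` from `z`. Every vertex `z` has a neighbour `y` with
`w z y + f y ≤ f z`, except possibly `a` when `f a = α` and `b` when `f b = β`. Choosing such a
neighbour as the parent of `z`, and joining `a` and `b` when both are exceptional, gives a shortest
paths tree `T` rooted at the point: in `T`, any two vertices `x` and `y` are at distance at most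
`f x + f y`, which is at most twice the eccentricity of the point. As `G` has finitely many spanning
trees, one of minimum diameter satisfies this bound for all points at once, hence for the infimum.
-/

open SimpleGraph

section WalkWeight

variable {V : Type*} {G : SimpleGraph V} {w : V → V → ℝ} {u v x : V}

lemma walkWeight_nil : walkWeight w (Walk.nil : G.Walk u u) = 0 := by
  simp [walkWeight]

lemma walkWeight_cons (h : G.Adj u v) (p : G.Walk v x) :
    walkWeight w (Walk.cons h p) = w u v + walkWeight w p := by
  simp [walkWeight]

lemma walkWeight_append (p : G.Walk u v) (q : G.Walk v x) :
    walkWeight w (p.append q) = walkWeight w p + walkWeight w q := by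
  simp [walkWeight]

lemma walkWeight_reverse (hws : ∀ a b, w a b = w b a) (p : G.Walk u v) :
    walkWeight w p.reverse = walkWeight w p := by
  induction p with
  | nil => rfl
  | cons h p ih =>
    rw [Walk.reverse_cons, walkWeight_append, ih, walkWeight_cons, walkWeight_cons,
      walkWeight_nil, add_zero, add_comm, hws]

lemma walkWeight_nonneg (hw : ∀ a b, G.Adj a b → 0 ≤ w a b) (p : G.Walk u v) :
    0 ≤ walkWeight w p := by
  induction p with
  | nil => exact walkWeight_nil.ge
  | cons h p ih =>
    rw [walkWeight_cons]
    exact add_nonneg (hw _ _ h) ih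

end WalkWeight

section WeightedDistance

variable {V : Type*} {G : SimpleGraph V} {w : V → V → ℝ} {u v : V}

lemma wdist_le_walkWeight (hw : ∀ a b, G.Adj a b → 0 ≤ w a b) (p : G.Walk u v) :
    wdist G w u v ≤ walkWeight w p :=
  csInf_le ⟨0, by rintro _ ⟨q, rfl⟩; exact walkWeight_nonneg hw q⟩ ⟨p, rfl⟩

lemma le_wdist (huv : G.Reachable u v) {c : ℝ} (h : ∀ p : G.Walk u v, c ≤ walkWeight w p) :
    c ≤ wdist G w u v := by
  obtain ⟨p⟩ := huv
  exact le_csInf ⟨_, p, rfl⟩ (by rintro _ ⟨q, rfl⟩; exact h q)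

lemma wdist_nonneg (hw : ∀ a b, G.Adj a b → 0 ≤ w a b) (u v : V) : 0 ≤ wdist G w u v :=
  Real.sInf_nonneg (by rintro _ ⟨p, rfl⟩; exact walkWeight_nonneg hw p)

lemma wdist_self (hw : ∀ a b, G.Adj a b → 0 ≤ w a b) (u : V) : wdist G w u u = 0 :=
  ((wdist_le_walkWeight hw Walk.nil).trans_eq walkWeight_nil).antisymm (wdist_nonneg hw u u)

lemma wdist_comm (hws : ∀ a b, w a b = w b a) (u v : V) : wdist G w u v = wdist G w v u := by
  refine congrArg sInf (Set.ext fun c => ⟨?_, ?_⟩) <;>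
  · rintro ⟨p, hp⟩
    exact ⟨p.reverse, (walkWeight_reverse hws p).trans hp⟩

lemma exists_adj_add_wdist_le (hw : ∀ a b, G.Adj a b → 0 ≤ w a b) {z a : V}
    [Finite (G.neighborSet z)] (hza : G.Reachable z a) (hne : z ≠ a) :
    ∃ y, G.Adj z y ∧ w z y + wdist G w y a ≤ wdist G w z a := by
  have neighborSet_nonempty : (G.neighborSet z).Nonempty := by
    obtain ⟨p⟩ := hza
    cases p with
    | nil => exact absurd rfl hne
    | cons h _ => exact ⟨_, h⟩
  obtain ⟨y, hzy, hmin⟩ := Set.exists_min_image (G.neighborSet z)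
    (fun y => w z y + wdist G w y a) (Set.toFinite _) neighborSet_nonempty
  refine ⟨y, hzy, le_wdist hza fun p => ?_⟩
  cases p with
  | nil => exact absurd rfl hne
  | @cons _ x _ hzx p =>
    calc w z y + wdist G w y a ≤ w z x + wdist G w x a := hmin x hzx
      _ ≤ w z x + walkWeight w p := by gcongr; exact wdist_le_walkWeight hw p
      _ = walkWeight w (Walk.cons hzx p) := (walkWeight_cons hzx p).symm

end WeightedDistance

lemma wellFounded_onFun_lt {V β : Type*} [Finite V] [Preorder β] (f : V → β) :
    WellFounded (Function.onFun (· < ·) f) :=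
  Set.wellFoundedOn_range.1 (Set.finite_range f).wellFoundedOn

section ParentGraph

variable {V β : Type*} [Preorder β] {r : V} {parent : V → V} {f : V → β}

/-- The graph joining each vertex other than the root `r` to its parent. The value of `parent` at
`r` is irrelevant. -/
def parentGraph (r : V) (parent : V → V) : SimpleGraph V :=
  SimpleGraph.fromRel fun x y => x ≠ r ∧ parent x = y

lemma parentGraph_le {G : SimpleGraph V} (h : ∀ z ≠ r, G.Adj z (parent z)) :
    parentGraph r parent ≤ G := by
  rintro x y ⟨-, ⟨hx, rfl⟩ | ⟨hy, rfl⟩⟩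
  exacts [h x hx, (h y hy).symm]

lemma parentGraph_adj (hf : ∀ z ≠ r, parent z = r ∨ f (parent z) < f z) {z : V} (hz : z ≠ r) :
    (parentGraph r parent).Adj z (parent z) := by
  refine ⟨fun h => ?_, Or.inl ⟨hz, rfl⟩⟩
  rcases hf z hz with hr | hlt
  · exact hz (h.trans hr)
  · exact hlt.ne (congrArg f h.symm)

lemma parentGraph_connected [Finite V] (hf : ∀ z ≠ r, parent z = r ∨ f (parent z) < f z) :
    (parentGraph r parent).Connected := by
  have reachable_root (z : V) : (parentGraph r parent).Reachable z r := by
    induction z using (wellFounded_onFun_lt f).induction with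
    | _ z ih =>
      rcases eq_or_ne z r with rfl | hz
      · rfl
      have hadj := parentGraph_adj hf hz
      rcases hf z hz with hr | hlt
      · exact hr ▸ hadj.reachable
      · exact hadj.reachable.trans (ih _ hlt)
  exact (connected_iff _).2 ⟨fun x y => (reachable_root x).trans (reachable_root y).symm, ⟨r⟩⟩

lemma parentGraph_edgeSet_subset :
    (parentGraph r parent).edgeSet ⊆ (fun z => s(z, parent z)) '' {r}ᶜ := by
  intro e
  induction e with
  | _ x y =>
    rw [mem_edgeSet, parentGraph, fromRel_adj]
    rintro ⟨-, ⟨hx, rfl⟩ | ⟨hy, rfl⟩⟩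
    exacts [⟨x, hx, rfl⟩, ⟨y, hy, Sym2.eq_swap⟩]

lemma parentGraph_isTree [Finite V] (hf : ∀ z ≠ r, parent z = r ∨ f (parent z) < f z) :
    (parentGraph r parent).IsTree := by
  have hconn := parentGraph_connected hf
  refine isTree_iff_connected_and_card.2 ⟨hconn, le_antisymm ?_ ?_⟩
  · calc Nat.card (parentGraph r parent).edgeSet + 1
        ≤ ((fun z => s(z, parent z)) '' {r}ᶜ).ncard + 1 := by
          gcongr
          exact Set.ncard_le_ncard parentGraph_edgeSet_subset
      _ ≤ ({r}ᶜ : Set V).ncard + 1 := by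
          gcongr
          exact Set.ncard_image_le
      _ = Nat.card V := by
          rw [← Set.ncard_singleton r, Set.ncard_compl_add_ncard]
  · exact hconn.card_vert_le_card_edgeSet_add_one

end ParentGraph

section Descent

variable {V : Type*} [Finite V] {G : SimpleGraph V} {w : V → V → ℝ} {f : V → ℝ}

lemma exists_walk_add_le_of_descent (hw : ∀ a b, G.Adj a b → 0 < w a b) {S : Set V}
    (hdesc : ∀ z ∉ S, ∃ y, G.Adj z y ∧ w z y + f y ≤ f z) (z : V) :
    ∃ s ∈ S, ∃ p : G.Walk z s, walkWeight w p + f s ≤ f z := by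
  induction z using (wellFounded_onFun_lt f).induction with
  | _ z ih =>
    by_cases hz : z ∈ S
    · exact ⟨z, hz, Walk.nil, by rw [walkWeight_nil, zero_add]⟩
    obtain ⟨y, hzy, hle⟩ := hdesc z hz
    have hlt : f y < f z := by linarith [hw z y hzy]
    obtain ⟨s, hs, p, hp⟩ := ih y hlt
    exact ⟨s, hs, Walk.cons hzy p, by rw [walkWeight_cons]; linarith⟩

lemma wdist_le_add_of_descent (hw : ∀ a b, G.Adj a b → 0 < w a b) (hws : ∀ a b, w a b = w b a)
    {S : Set V} (hdesc : ∀ z ∉ S, ∃ y, G.Adj z y ∧ w z y + f y ≤ f z)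
    (hS : ∀ s ∈ S, ∀ t ∈ S, ∃ p : G.Walk s t, walkWeight w p ≤ f s + f t) (x y : V) :
    wdist G w x y ≤ f x + f y := by
  obtain ⟨s, hs, p, hp⟩ := exists_walk_add_le_of_descent hw hdesc x
  obtain ⟨t, ht, q, hq⟩ := exists_walk_add_le_of_descent hw hdesc y
  obtain ⟨m, hm⟩ := hS s hs t ht
  calc wdist G w x y ≤ walkWeight w (p.append (m.append q.reverse)) :=
        wdist_le_walkWeight (fun a b h => (hw a b h).le) _
    _ = walkWeight w p + (walkWeight w m + walkWeight w q) := by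
        rw [walkWeight_append, walkWeight_append, walkWeight_reverse hws]
    _ ≤ f x + f y := by linarith

/-- The case `a = b` is that of a single root. -/
lemma exists_isTree_of_descent (hw : ∀ a b, G.Adj a b → 0 < w a b) {a b : V}
    (hab : a = b ∨ G.Adj a b)
    (hdesc : ∀ z ∉ ({a, b} : Set V), ∃ y, G.Adj z y ∧ w z y + f y ≤ f z) :
    ∃ T ≤ G, T.IsTree ∧ (a = b ∨ T.Adj a b) ∧
      ∀ z ∉ ({a, b} : Set V), ∃ y, T.Adj z y ∧ w z y + f y ≤ f z := by
  classical
  have : Nonempty V := ⟨a⟩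
  choose! next next_adj next_le using hdesc
  let parent : V → V := Function.update next b a
  have parent_b : parent b = a := Function.update_self ..
  have parent_of_ne {z : V} (hz : z ≠ b) : parent z = next z := Function.update_of_ne hz ..
  have notMem {z : V} (hza : z ≠ a) (hzb : z ≠ b) : z ∉ ({a, b} : Set V) := by simp [hza, hzb]
  have parent_adj : ∀ z ≠ a, G.Adj z (parent z) := by
    intro z hza
    rcases eq_or_ne z b with rfl | hzb
    · exact parent_b ▸ (hab.resolve_left hza.symm).symm
    · exact parent_of_ne hzb ▸ next_adj z (notMem hza hzb)
  have parent_lt : ∀ z ≠ a, parent z = a ∨ f (parent z) < f z := by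
    intro z hza
    rcases eq_or_ne z b with rfl | hzb
    · exact Or.inl parent_b
    · have hz := notMem hza hzb
      rw [parent_of_ne hzb]
      exact Or.inr (by linarith [hw z _ (next_adj z hz), next_le z hz])
  refine ⟨parentGraph a parent, parentGraph_le parent_adj, parentGraph_isTree parent_lt, ?_, ?_⟩
  · refine or_iff_not_imp_left.2 fun hne => ?_
    simpa only [parent_b] using (parentGraph_adj parent_lt (Ne.symm hne)).symm
  · intro z hz
    have hne : z ≠ a ∧ z ≠ b := by simpa using hz
    exact ⟨next z, parent_of_ne hne.2 ▸ parentGraph_adj parent_lt hne.1, next_le z hz⟩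

lemma exists_isTree_wdist_le_add_of_descent (hw : ∀ a b, G.Adj a b → 0 < w a b)
    (hws : ∀ a b, w a b = w b a) (hf : ∀ z, 0 ≤ f z) {a b : V}
    (hab : a = b ∨ G.Adj a b ∧ w a b ≤ f a + f b)
    (hdesc : ∀ z ∉ ({a, b} : Set V), ∃ y, G.Adj z y ∧ w z y + f y ≤ f z) :
    ∃ T ≤ G, T.IsTree ∧ ∀ x y, wdist T w x y ≤ f x + f y := by
  obtain ⟨T, hTG, hT, hTab, hTdesc⟩ := exists_isTree_of_descent hw (hab.imp_right And.left) hdesc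
  refine ⟨T, hTG, hT, wdist_le_add_of_descent (fun a b h => hw a b (hTG h)) hws hTdesc ?_⟩
  have walk_self (s : V) : ∃ p : T.Walk s s, walkWeight w p ≤ f s + f s :=
    ⟨Walk.nil, walkWeight_nil.trans_le (add_nonneg (hf s) (hf s))⟩
  have walk_ab : ∃ p : T.Walk a b, walkWeight w p ≤ f a + f b := by
    rcases eq_or_ne a b with rfl | hne
    · exact walk_self a
    · refine ⟨(hTab.resolve_left hne).toWalk, ?_⟩
      rw [Adj.toWalk, walkWeight_cons, walkWeight_nil, add_zero]
      exact (hab.resolve_left hne).2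
  have walk_ba : ∃ p : T.Walk b a, walkWeight w p ≤ f b + f a := by
    obtain ⟨p, hp⟩ := walk_ab
    exact ⟨p.reverse, by rwa [walkWeight_reverse hws, add_comm]⟩
  rintro s (rfl | rfl) t (rfl | rfl)
  exacts [walk_self _, walk_ab, walk_ba, walk_self _]

end Descent

section TwoSourceDistance

variable {V : Type*} {G : SimpleGraph V} {w : V → V → ℝ}

/-- The distance from `z` to an extra vertex attached to `a` by an edge of weight `α` and to `b` by
an edge of weight `β`. For `α + β = w a b` it is the distance to the point of the edge `ab` at
distance `α` from `a`. -/
noncomputable def twoSourceDist (G : SimpleGraph V) (w : V → V → ℝ) (a b : V) (α β : ℝ) (z : V) :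
    ℝ :=
  min (α + wdist G w a z) (β + wdist G w b z)

variable {a b : V} {α β : ℝ}

lemma twoSourceDist_nonneg (hw : ∀ a b, G.Adj a b → 0 ≤ w a b) (hα : 0 ≤ α) (hβ : 0 ≤ β) (z : V) :
    0 ≤ twoSourceDist G w a b α β z :=
  le_min (add_nonneg hα (wdist_nonneg hw a z)) (add_nonneg hβ (wdist_nonneg hw b z))

lemma twoSourceDist_swap (z : V) : twoSourceDist G w a b α β z = twoSourceDist G w b a β α z :=
  min_comm _ _

lemma twoSourceDist_eq_or_exists_adj_of_le [Finite V] (hG : G.Connected)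
    (hw : ∀ a b, G.Adj a b → 0 ≤ w a b) (hws : ∀ a b, w a b = w b a) {z : V}
    (hle : α + wdist G w a z ≤ β + wdist G w b z) :
    (z = a ∧ twoSourceDist G w a b α β a = α) ∨
      ∃ y, G.Adj z y ∧
        w z y + twoSourceDist G w a b α β y ≤ twoSourceDist G w a b α β z := by
  have twoSourceDist_eq : twoSourceDist G w a b α β z = α + wdist G w a z := min_eq_left hle
  rcases eq_or_ne z a with rfl | hza
  · exact Or.inl ⟨rfl, by rw [twoSourceDist_eq, wdist_self hw, add_zero]⟩
  obtain ⟨y, hzy, hy⟩ := exists_adj_add_wdist_le hw (hG z a) hza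
  refine Or.inr ⟨y, hzy, ?_⟩
  calc w z y + twoSourceDist G w a b α β y ≤ w z y + (α + wdist G w a y) := by
        gcongr
        exact min_le_left _ _
    _ = α + (w z y + wdist G w y a) := by rw [wdist_comm hws a y, add_left_comm]
    _ ≤ α + wdist G w z a := by gcongr
    _ = twoSourceDist G w a b α β z := by rw [twoSourceDist_eq, wdist_comm hws a z]

lemma twoSourceDist_eq_or_exists_adj [Finite V] (hG : G.Connected)
    (hw : ∀ a b, G.Adj a b → 0 ≤ w a b) (hws : ∀ a b, w a b = w b a) (z : V) :
    (z = a ∧ twoSourceDist G w a b α β a = α) ∨ (z = b ∧ twoSourceDist G w a b α β b = β) ∨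
      ∃ y, G.Adj z y ∧
        w z y + twoSourceDist G w a b α β y ≤ twoSourceDist G w a b α β z := by
  rcases le_total (α + wdist G w a z) (β + wdist G w b z) with hle | hle
  · exact (twoSourceDist_eq_or_exists_adj_of_le hG hw hws hle).imp_right Or.inr
  · right
    simpa only [twoSourceDist_swap (a := b) (b := a)] using
      twoSourceDist_eq_or_exists_adj_of_le hG hw hws hle

lemma exists_isTree_wdist_le_twoSourceDist_add [Finite V] (hG : G.Connected)
    (hw : ∀ a b, G.Adj a b → 0 < w a b) (hws : ∀ a b, w a b = w b a) (hab : G.Adj a b)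
    (hα : 0 ≤ α) (hβ : 0 ≤ β) (hαβ : w a b ≤ α + β) :
    ∃ T ≤ G, T.IsTree ∧
      ∀ x y, wdist T w x y ≤ twoSourceDist G w a b α β x + twoSourceDist G w a b α β y := by
  have hw₀ : ∀ a b, G.Adj a b → 0 ≤ w a b := fun a b h => (hw a b h).le
  have hf := twoSourceDist_nonneg (G := G) (a := a) (b := b) hw₀ hα hβ
  have hstep := twoSourceDist_eq_or_exists_adj (a := a) (b := b) (α := α) (β := β) hG hw₀ hws
  by_cases ha : twoSourceDist G w a b α β a = α
  · by_cases hb : twoSourceDist G w a b α β b = β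
    · exact exists_isTree_wdist_le_add_of_descent hw hws hf (Or.inr ⟨hab, by rwa [ha, hb]⟩)
        fun z hz => ((hstep z).resolve_left fun h => hz (Or.inl h.1)).resolve_left
          fun h => hz (Or.inr h.1)
    · exact exists_isTree_wdist_le_add_of_descent hw hws hf (a := a) (Or.inl rfl)
        fun z hz => ((hstep z).resolve_left fun h => hz (Or.inl h.1)).resolve_left
          fun h => hb h.2
  · exact exists_isTree_wdist_le_add_of_descent hw hws hf (a := b) (Or.inl rfl)
      fun z hz => ((hstep z).resolve_left fun h => ha h.2).resolve_left
        fun h => hz (Or.inl h.1)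

end TwoSourceDistance

/-- The diameter of `G` with respect to the weighted distance. For infinite `V` it can take the junk
value `0`, the supremum of an unbounded set. -/
noncomputable def weightedDiam {V : Type*} (G : SimpleGraph V) (w : V → V → ℝ) : ℝ :=
  ⨆ u : V, ⨆ v : V, wdist G w u v

lemma exists_isTree_weightedDiam_le {V : Type*} [Finite V] {G : SimpleGraph V} (hG : G.Connected)
    {w : V → V → ℝ} (hw : ∀ a b, G.Adj a b → 0 < w a b) (hws : ∀ a b, w a b = w b a) {a b : V}
    (hab : G.Adj a b) {α β : ℝ} (hα : 0 ≤ α) (hβ : 0 ≤ β) (hαβ : w a b ≤ α + β) :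
    ∃ T ≤ G, T.IsTree ∧ weightedDiam T w ≤ 2 * ⨆ z, twoSourceDist G w a b α β z := by
  have := hG.nonempty
  obtain ⟨T, hTG, hT, hdist⟩ :=
    exists_isTree_wdist_le_twoSourceDist_add hG hw hws hab hα hβ hαβ
  have le_ecc (z : V) : twoSourceDist G w a b α β z ≤ ⨆ z, twoSourceDist G w a b α β z :=
    le_ciSup (Set.finite_range _).bddAbove z
  refine ⟨T, hTG, hT, ciSup_le fun x => ciSup_le fun y => ?_⟩
  linarith [hdist x y, le_ecc x, le_ecc y]

/-- There exists a spanning tree `T*` of `G` whose diameter is at most twice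
the generalized radius of `G` (such a tree is obtained as a shortest paths tree
rooted at an absolute center of `G`); in particular the minimum diameter
spanning tree problem reduces to finding an absolute center. -/
theorem stmt16 {V : Type*} [Fintype V] (G : SimpleGraph V) (hG : G.Connected)
    (w : V → V → ℝ) (hw : ∀ a b : V, G.Adj a b → 0 < w a b)
    (hws : ∀ a b : V, w a b = w b a)
    (hE : ∃ a b : V, G.Adj a b) :
    ∃ T : SimpleGraph V, T ≤ G ∧ T.IsTree ∧
      (⨆ u : V, ⨆ v : V, wdist T w u v) ≤
        2 * sInf {x : ℝ | ∃ a b : V, G.Adj a b ∧ ∃ α ∈ Set.Icc 0 (w a b),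
          x = ⨆ z : V, min (α + wdist G w a z) (w a b - α + wdist G w b z)} := by
  obtain ⟨T, ⟨hTG, hT⟩, hmin⟩ := Set.exists_min_image {T : SimpleGraph V | T ≤ G ∧ T.IsTree}
    (fun T => weightedDiam T w) (Set.toFinite _) hG.exists_isTree_le
  refine ⟨T, hTG, hT, ?_⟩
  rw [← div_le_iff₀' two_pos]
  refine le_csInf ?_ ?_
  · obtain ⟨a, b, hab⟩ := hE
    exact ⟨_, a, b, hab, 0, ⟨le_rfl, (hw a b hab).le⟩, rfl⟩
  · rintro _ ⟨a, b, hab, α, ⟨hα, hαw⟩, rfl⟩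
    obtain ⟨T', hT'G, hT', hdiam⟩ := exists_isTree_weightedDiam_le hG hw hws hab hα
      (sub_nonneg.2 hαw) (add_sub_cancel α (w a b)).ge
    exact (div_le_iff₀' two_pos).2 ((hmin T' ⟨hT'G, hT'⟩).trans hdiam)
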